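/- For every ε > 0 there exists a finite family of parallelograms P₁, ..., P_S in [0,1]² whose left sides cover {0} × [ε, 1−ε] and such that for every strip J of the form [0,x₀]×[0,1] or [0,1]×[0,y₀] one has |λ²(⋃_s P_s ∩ J) − (3/4)·λ²(J)| < ε. -/

import Mathlib

open MeasureTheory Set

/-- The parallelogram `conv{(0,b₁),(0,b₁+δ),(1,b₂),(1,b₂+δ)}`. -/
noncomputable def Par (b₁ b₂ δ : ℝ) : Set (ℝ × ℝ) :=
  convexHull ℝ {(0, b₁), (0, b₁ + δ), (1, b₂), (1, b₂ + δ)}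

/-- A valid parallelogram datum: `δ > 0` and `b₁, b₂ ∈ [0, 1 - δ]`. -/
def GoodPar (b₁ b₂ δ : ℝ) : Prop :=
  0 < δ ∧ b₁ ∈ Icc 0 (1 - δ) ∧ b₂ ∈ Icc 0 (1 - δ)

/-! Overlay two families of parallelograms of density one half: horizontal bands, bounded by
`k ≤ N y ≤ k + 1/2`, and tilted ones, bounded by `k ≤ N y - m x - 1/2 ≤ k + 1/2`, for integers `k`.
On the left side the two families alternate, so together they cover it. When `m` and `N` are large,
`N y mod 1` and `N y - m x mod 1` behave like independent uniform variables on every box, so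
the part of the box that both families miss has proportion close to `1/4`. Taking `N = q²` and
`m = q` makes the tilted bands rise by only `m / N = 1 / q`, so discarding those that leave the unit
square costs area `O(1 / q)`. -/

section PeriodicIntegral

variable {E : Type*} [NormedAddCommGroup E] [NormedSpace ℝ E] {f : ℝ → E} {C : ℝ}

lemma norm_intervalIntegral_sub_mean_le_of_periodic (hf : AEStronglyMeasurable f)
    (hfC : ∀ u, ‖f u‖ ≤ C) (hper : Function.Periodic f 1) (a b : ℝ) :
    ‖(∫ u in a..b, f u) - (b - a) • ∫ u in (0 : ℝ)..1, f u‖ ≤ 2 * C := by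
  have hint (s t : ℝ) : IntervalIntegrable f volume s t :=
    (intervalIntegrable_const (c := C)).mono_fun hf.restrict <|
      .of_forall fun u => (hfC u).trans (le_abs_self C)
  have bound (s t : ℝ) (hst : |t - s| ≤ 1) : ‖∫ u in s..t, f u‖ ≤ C :=
    (intervalIntegral.norm_integral_le_of_norm_le_const fun u _ => hfC u).trans <|
      mul_le_of_le_one_right ((norm_nonneg _).trans (hfC 0)) hst
  set M := ∫ u in (0 : ℝ)..1, f u
  set n := ⌊b - a⌋
  have whole_periods : ∫ u in a..a + n, f u = (n : ℝ) • M := by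
    have h := hper.intervalIntegral_add_zsmul_eq n a hint
    rwa [hper.intervalIntegral_add_eq a 0, zero_add, zsmul_one, ← Int.cast_smul_eq_zsmul ℝ] at h
  have remainder : (∫ u in a..b, f u) - (b - a) • M
      = (∫ u in a + n..b, f u) - Int.fract (b - a) • M := by
    rw [← intervalIntegral.integral_add_adjacent_intervals (hint a (a + n)) (hint _ b),
      whole_periods, Int.fract, sub_smul (b - a) (n : ℝ)]
    abel
  have hfract : |Int.fract (b - a)| ≤ 1 := by
    rw [Int.abs_fract]
    exact (Int.fract_lt_one _).le
  calc ‖(∫ u in a..b, f u) - (b - a) • M‖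
      ≤ ‖∫ u in a + n..b, f u‖ + ‖Int.fract (b - a) • M‖ := remainder ▸ norm_sub_le _ _
    _ ≤ C + C := by
      refine add_le_add (bound _ _ ?_) ?_
      · rwa [← sub_sub]
      · rw [norm_smul, Real.norm_eq_abs]
        exact (mul_le_of_le_one_left (norm_nonneg _) hfract).trans (bound 0 1 (by simp))
    _ = 2 * C := (two_mul C).symm

lemma norm_intervalIntegral_comp_add_mul_sub_mean_le_of_periodic (hf : AEStronglyMeasurable f)
    (hfC : ∀ u, ‖f u‖ ≤ C) (hper : Function.Periodic f 1) (s : ℝ) {m : ℝ} (hm : m ≠ 0) (a b : ℝ) :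
    ‖(∫ x in a..b, f (s + m * x)) - (b - a) • ∫ u in (0 : ℝ)..1, f u‖ ≤ 2 * C / |m| := by
  have hrescale : (b - a) • (∫ u in (0 : ℝ)..1, f u)
      = m⁻¹ • ((s + m * b) - (s + m * a)) • ∫ u in (0 : ℝ)..1, f u := by
    rw [smul_smul]
    congr 1
    field_simp
    ring
  rw [intervalIntegral.integral_comp_add_mul f hm, hrescale, ← smul_sub, norm_smul, norm_inv,
    Real.norm_eq_abs, div_eq_inv_mul]
  gcongr
  exact norm_intervalIntegral_sub_mean_le_of_periodic hf hfC hper _ _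

end PeriodicIntegral

section PeriodicProduct

variable {f g φ w : ℝ → ℝ} {C D m N a b c d : ℝ}

lemma integrableOn_mul_of_bound {α : Type*} [MeasurableSpace α] {μ : Measure α} {s : Set α}
    {F G : α → ℝ} (hs : μ s < ⊤) (hF : Measurable F) (hG : Measurable G)
    (hFC : ∀ p, |F p| ≤ C) (hGD : ∀ p, |G p| ≤ D) : IntegrableOn (fun p => F p * G p) s μ := by
  refine .of_bound hs (hF.mul hG).aestronglyMeasurable (C * D) (.of_forall fun p => ?_)
  rw [norm_mul]
  exact mul_le_mul (hFC p) (hGD p) (norm_nonneg _) ((abs_nonneg _).trans (hFC p))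

lemma volume_real_Icc_prod_Icc (hab : a ≤ b) (hcd : c ≤ d) :
    volume.real (Icc a b ×ˢ Icc c d) = (b - a) * (d - c) := by
  rw [Measure.volume_eq_prod, measureReal_prod_prod, Real.volume_real_Icc_of_le hab,
    Real.volume_real_Icc_of_le hcd]

lemma abs_setIntegral_mul_periodic_sub_mean_le (hw : Measurable w) (hg : Measurable g)
    (hφ : Measurable φ) (hwC : ∀ y, |w y| ≤ C) (hgD : ∀ u, |g u| ≤ D)
    (hgper : Function.Periodic g 1) (hm : m ≠ 0) (hab : a ≤ b) (hcd : c ≤ d) :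
    |∫ p in Icc a b ×ˢ Icc c d, w p.2 * (g (φ p.2 + m * p.1) - ∫ u in (0 : ℝ)..1, g u)|
      ≤ C * (2 * D / |m|) * (d - c) := by
  set β := ∫ u in (0 : ℝ)..1, g u
  have hC : 0 ≤ C := (abs_nonneg _).trans (hwC 0)
  have hint : IntegrableOn (fun p : ℝ × ℝ => w p.2 * (g (φ p.2 + m * p.1) - β))
      (Icc a b ×ˢ Icc c d) :=
    integrableOn_mul_of_bound (D := D + |β|) (isCompact_Icc.prod isCompact_Icc).measure_lt_top
      (by fun_prop) (by fun_prop) (fun p => hwC _)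
      fun p => (abs_sub _ _).trans (by gcongr; exact hgD _)
  have slice (y : ℝ) : ∫ x in Icc a b, w y * (g (φ y + m * x) - β)
      = w y * ((∫ x in a..b, g (φ y + m * x)) - (b - a) • β) := by
    have hgint : IntegrableOn (fun x => g (φ y + m * x)) (Icc a b) :=
      .of_bound isCompact_Icc.measure_lt_top (hg.comp (by fun_prop)).aestronglyMeasurable D
        (.of_forall fun _ => hgD _)
    rw [integral_const_mul, integral_sub hgint (by simp),
      intervalIntegral.integral_of_le hab, ← integral_Icc_eq_integral_Ioc]
    simp [hab]
  rw [Measure.volume_eq_prod, ← Measure.prod_restrict, integral_prod_symm _ (by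
    rw [Measure.prod_restrict]; exact hint), ← Real.norm_eq_abs, ← Real.volume_real_Icc_of_le hcd]
  refine norm_setIntegral_le_of_norm_le_const isCompact_Icc.measure_lt_top fun y _ => ?_
  rw [slice, norm_mul]
  gcongr
  · exact hwC y
  · exact norm_intervalIntegral_comp_add_mul_sub_mean_le_of_periodic hg.aestronglyMeasurable hgD
      hgper _ hm a b

lemma abs_setIntegral_periodic_mul_periodic_sub_le (hf : Measurable f) (hg : Measurable g)
    (hφ : Measurable φ) (hfC : ∀ u, |f u| ≤ C) (hgD : ∀ u, |g u| ≤ D)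
    (hfper : Function.Periodic f 1) (hgper : Function.Periodic g 1) (hm : m ≠ 0) (hN : N ≠ 0)
    (hab : a ≤ b) (hcd : c ≤ d) :
    |(∫ p in Icc a b ×ˢ Icc c d, f (N * p.2) * g (φ p.2 + m * p.1)) -
        (b - a) * (d - c) * ((∫ u in (0 : ℝ)..1, f u) * ∫ u in (0 : ℝ)..1, g u)|
      ≤ 2 * C * D * ((d - c) / |m| + (b - a) / |N|) := by
  set α := ∫ u in (0 : ℝ)..1, f u
  set β := ∫ u in (0 : ℝ)..1, g u
  set J := ∫ y in c..d, f (N * y)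
  have hβD : |β| ≤ D := by
    simpa using intervalIntegral.norm_integral_le_of_norm_le_const (a := 0) (b := 1)
      (f := g) fun u _ => hgD u
  have split : (∫ p in Icc a b ×ˢ Icc c d, f (N * p.2) * g (φ p.2 + m * p.1))
      = (∫ p in Icc a b ×ˢ Icc c d, f (N * p.2) * (g (φ p.2 + m * p.1) - β))
        + (b - a) * β * J := by
    have mean_part : (∫ p in Icc a b ×ˢ Icc c d, β * f (N * p.2)) = (b - a) * β * J := by
      rw [Measure.volume_eq_prod, setIntegral_prod_mul (fun _ => β) (fun y => f (N * y))]
      simp [J, intervalIntegral.integral_of_le hcd, integral_Icc_eq_integral_Ioc, hab]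
    have hbox : volume (Icc a b ×ˢ Icc c d) < ⊤ :=
      (isCompact_Icc.prod isCompact_Icc).measure_lt_top
    rw [← mean_part, ← integral_add]
    · congr with p
      ring
    · exact integrableOn_mul_of_bound (D := D + |β|) hbox (by fun_prop) (by fun_prop)
        (fun p => hfC _) fun p => (abs_sub _ _).trans (by gcongr; exact hgD _)
    · exact integrableOn_mul_of_bound hbox (by fun_prop) (by fun_prop) (fun _ => le_rfl)
        fun p => hfC _
  have outer : |J - (d - c) * α| ≤ 2 * C / |N| := by
    simpa using norm_intervalIntegral_comp_add_mul_sub_mean_le_of_periodic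
      hf.aestronglyMeasurable hfC hfper 0 hN c d
  have inner := abs_setIntegral_mul_periodic_sub_mean_le (w := fun y => f (N * y)) (by fun_prop)
    hg hφ (fun y => hfC _) hgD hgper hm hab hcd
  rw [split, add_sub_assoc, show (b - a) * β * J - (b - a) * (d - c) * (α * β)
    = (b - a) * β * (J - (d - c) * α) by ring]
  calc _ ≤ C * (2 * D / |m|) * (d - c) + (b - a) * D * (2 * C / |N|) := by
        refine (abs_add_le _ _).trans (add_le_add inner ?_)
        rw [abs_mul, abs_mul, abs_of_nonneg (sub_nonneg.2 hab)]
        have := sub_nonneg.2 hab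
        have := (abs_nonneg β).trans hβD
        gcongr
    _ = 2 * C * D * ((d - c) / |m| + (b - a) / |N|) := by ring

end PeriodicProduct

section GapWave

/-- The `1`-periodic indicator function of the gaps `(k + 1/2, k + 1)`, `k ∈ ℤ`, left by stripes of
density one half. -/
noncomputable def gapWave : ℝ → ℝ := {u : ℝ | 1 / 2 < Int.fract u}.indicator 1

lemma measurableSet_half_lt_fract : MeasurableSet {u : ℝ | 1 / 2 < Int.fract u} :=
  measurableSet_lt measurable_const measurable_fract

lemma measurable_gapWave : Measurable gapWave :=
  measurable_one.indicator measurableSet_half_lt_fract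

lemma abs_gapWave_le_one (u : ℝ) : |gapWave u| ≤ 1 :=
  (norm_indicator_le_norm_self (1 : ℝ → ℝ) u).trans (by simp)

lemma gapWave_periodic : Function.Periodic gapWave 1 := fun u => by
  simp [gapWave, indicator]

lemma integral_gapWave : ∫ u in (0 : ℝ)..1, gapWave u = 1 / 2 := by
  have gap_inter_Ioo : {u : ℝ | 1 / 2 < Int.fract u} ∩ Ioo 0 1 = Ioo (1 / 2) 1 := by
    ext u
    constructor
    · rintro ⟨hu, hu0, hu1⟩
      rw [mem_ofPred_eq, Int.fract_eq_self.2 ⟨hu0.le, hu1⟩] at hu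
      exact ⟨hu, hu1⟩
    · rintro ⟨hu, hu1⟩
      have hu0 : 0 < u := by linarith
      refine ⟨?_, hu0, hu1⟩
      rwa [mem_ofPred_eq, Int.fract_eq_self.2 ⟨hu0.le, hu1⟩]
  rw [intervalIntegral.integral_of_le zero_le_one, integral_Ioc_eq_integral_Ioo, gapWave,
    integral_indicator_one measurableSet_half_lt_fract,
    measureReal_restrict_apply measurableSet_half_lt_fract, gap_inter_Ioo]
  norm_num

/-- The points `(x, y)` missed both by the horizontal bands `k ≤ N y ≤ k + 1/2` and by the tilted
bands `k ≤ N y - m x - 1/2 ≤ k + 1/2`, where `k` ranges over `ℤ`. -/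
def doubleGap (N m : ℝ) : Set (ℝ × ℝ) :=
  {p | 1 / 2 < Int.fract (N * p.2) ∧ 1 / 2 < Int.fract (N * p.2 - m * p.1 - 1 / 2)}

lemma measurableSet_doubleGap (N m : ℝ) : MeasurableSet (doubleGap N m) :=
  have h₁ : Measurable fun p : ℝ × ℝ => N * p.2 := by fun_prop
  have h₂ : Measurable fun p : ℝ × ℝ => N * p.2 - m * p.1 - 1 / 2 := by fun_prop
  (h₁ measurableSet_half_lt_fract).inter (h₂ measurableSet_half_lt_fract)

lemma indicator_doubleGap (N m : ℝ) (p : ℝ × ℝ) :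
    (doubleGap N m).indicator 1 p
      = gapWave (N * p.2) * gapWave (N * p.2 - 1 / 2 + -m * p.1) := by
  rw [show N * p.2 - 1 / 2 + -m * p.1 = N * p.2 - m * p.1 - 1 / 2 by ring]
  simp only [gapWave, doubleGap, indicator, mem_ofPred_eq, Pi.one_apply]
  grind

lemma abs_volume_real_box_inter_doubleGap_sub_le {N m a b c d : ℝ} (hN : N ≠ 0) (hm : m ≠ 0)
    (hab : a ≤ b) (hcd : c ≤ d) :
    |volume.real (Icc a b ×ˢ Icc c d ∩ doubleGap N m) - (b - a) * (d - c) / 4|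
      ≤ 2 * ((d - c) / |m| + (b - a) / |N|) := by
  have h := abs_setIntegral_periodic_mul_periodic_sub_le (φ := fun y => N * y - 1 / 2)
    measurable_gapWave measurable_gapWave (by fun_prop) abs_gapWave_le_one abs_gapWave_le_one
    gapWave_periodic gapWave_periodic (neg_ne_zero.2 hm) hN hab hcd
  simp only [← indicator_doubleGap] at h
  rw [integral_indicator_one (measurableSet_doubleGap N m),
    measureReal_restrict_apply (measurableSet_doubleGap N m), inter_comm, integral_gapWave,
    abs_neg] at h
  convert h using 2 <;> ring

end GapWave

section Parallelogram

lemma par_eq_image_shear (b₁ b₂ : ℝ) {δ : ℝ} (hδ : 0 ≤ δ) :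
    Par b₁ b₂ δ = AffineMap.fst.prod ((AffineMap.lineMap b₁ b₂).comp AffineMap.fst + AffineMap.snd)
      '' (Icc (0 : ℝ) 1 ×ˢ Icc (0 : ℝ) δ) := by
  rw [← segment_eq_Icc (𝕜 := ℝ) zero_le_one, ← segment_eq_Icc (𝕜 := ℝ) hδ, ← convexHull_pair,
    ← convexHull_pair, ← convexHull_prod, AffineMap.image_convexHull, Par]
  congr 1
  simp [-union_insert, insert_prod, singleton_prod, insert_union, image_insert_eq]

lemma mem_par_iff {b₁ b₂ δ x y : ℝ} (hδ : 0 ≤ δ) :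
    (x, y) ∈ Par b₁ b₂ δ ↔
      x ∈ Icc (0 : ℝ) 1 ∧ y ∈ Icc (AffineMap.lineMap b₁ b₂ x) (AffineMap.lineMap b₁ b₂ x + δ) := by
  rw [par_eq_image_shear b₁ b₂ hδ]
  constructor
  · rintro ⟨⟨x', t⟩, ⟨hx, ht⟩, h⟩
    obtain ⟨rfl, rfl⟩ := Prod.ext_iff.1 h
    simpa using ⟨hx, ht⟩
  · rintro ⟨hx, hy⟩
    exact ⟨(x, y - AffineMap.lineMap b₁ b₂ x), ⟨hx, sub_nonneg.2 hy.1, sub_le_iff_le_add'.2 hy.2⟩,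
      by simp⟩

lemma zero_mem_par_iff {b₁ b₂ δ y : ℝ} (hδ : 0 ≤ δ) :
    (0, y) ∈ Par b₁ b₂ δ ↔ y ∈ Icc b₁ (b₁ + δ) := by
  simp [mem_par_iff hδ]

lemma mem_par_div_iff {N k m x y : ℝ} (hN : 0 < N) :
    (x, y) ∈ Par (k / N) ((k + m) / N) (1 / (2 * N)) ↔
      x ∈ Icc (0 : ℝ) 1 ∧ N * y - m * x ∈ Icc k (k + 1 / 2) := by
  rw [mem_par_iff (by positivity)]
  refine and_congr_right fun _ => ?_
  have lower : AffineMap.lineMap (k / N) ((k + m) / N) x = (k + m * x) / N := by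
    rw [AffineMap.lineMap_apply_ring']
    ring
  have upper : (k + m * x) / N + 1 / (2 * N) = (k + 1 / 2 + m * x) / N := by
    field_simp
    ring
  rw [lower, upper, mem_Icc, div_le_iff₀' hN, le_div_iff₀' hN, mem_Icc, le_sub_iff_add_le,
    sub_le_iff_le_add]

lemma goodPar_div {N k m : ℝ} (hN : 0 < N) (hk : 0 ≤ k) (hm : 0 ≤ m) (hkm : k + m + 1 / 2 ≤ N) :
    GoodPar (k / N) ((k + m) / N) (1 / (2 * N)) := by
  have hδ : 1 - 1 / (2 * N) = (N - 1 / 2) / N := by field_simp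
  refine ⟨by positivity, ⟨by positivity, ?_⟩, ⟨by positivity, ?_⟩⟩ <;>
  · rw [hδ]
    gcongr
    linarith

lemma nullMeasurableSet_par (b₁ b₂ δ : ℝ) : NullMeasurableSet (Par b₁ b₂ δ) :=
  (convex_convexHull ℝ _).nullMeasurableSet volume

end Parallelogram

section Family

lemma fract_le_iff_exists_fin {u r : ℝ} {n : ℕ} (hr : r < 1) (hu : u ∈ Ioo (r - 1) n) :
    Int.fract u ≤ r ↔ ∃ k : Fin n, u ∈ Icc (k : ℝ) (k + r) := by
  constructor
  · intro h
    have hfloor := Int.floor_add_fract u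
    have hfloor_nonneg : 0 ≤ ⌊u⌋ := by
      have : (-1 : ℝ) < ⌊u⌋ := by linarith [hu.1]
      have : -1 < ⌊u⌋ := by exact_mod_cast this
      omega
    lift ⌊u⌋ to ℕ using hfloor_nonneg with k hk
    rw [Int.cast_natCast] at hfloor
    have hkn : k < n := by
      exact_mod_cast (show (k : ℝ) < n by linarith [hu.2, Int.fract_nonneg u])
    exact ⟨⟨k, hkn⟩, by dsimp only; linarith [Int.fract_nonneg u], by dsimp only; linarith⟩
  · rintro ⟨k, hk⟩
    have hfract : Int.fract u = u - (k : ℕ) :=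
      Int.fract_eq_iff.2 ⟨sub_nonneg.2 hk.1, by linarith [hk.2], (k : ℕ), by simp⟩
    linarith [hk.2]

variable {q : ℕ}

/-- The left height of each band, in units of `1 / q ^ 2`. The left summand indexes the horizontal
bands, and the right one those tilted bands that stay in the unit square. -/
noncomputable def bandOffset (q : ℕ) : Fin (q ^ 2) ⊕ Fin (q ^ 2 - q) → ℝ :=
  Sum.elim (fun k => (k : ℝ)) (fun k => (k : ℝ) + 1 / 2)

/-- The difference between the right and the left height of each band, in units of `1 / q ^ 2`. -/
def bandRise (q : ℕ) : Fin (q ^ 2) ⊕ Fin (q ^ 2 - q) → ℝ :=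
  Sum.elim (fun _ => 0) (fun _ => q)

/-- The set covered by the horizontal and the tilted bands of thickness `1 / (2 * q ^ 2)`. -/
noncomputable def bandUnion (q : ℕ) : Set (ℝ × ℝ) :=
  ⋃ i, Par (bandOffset q i / (q : ℝ) ^ 2) ((bandOffset q i + bandRise q i) / (q : ℝ) ^ 2)
    (1 / (2 * (q : ℝ) ^ 2))

lemma goodPar_band (hq : 0 < q) (i : Fin (q ^ 2) ⊕ Fin (q ^ 2 - q)) :
    GoodPar (bandOffset q i / (q : ℝ) ^ 2) ((bandOffset q i + bandRise q i) / (q : ℝ) ^ 2)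
      (1 / (2 * (q : ℝ) ^ 2)) := by
  have hN : (0 : ℝ) < (q : ℝ) ^ 2 := by positivity
  rcases i with k | k
  · have hk : (k : ℝ) + 1 ≤ (q : ℝ) ^ 2 := by exact_mod_cast k.2
    exact goodPar_div hN k.val.cast_nonneg le_rfl (by dsimp [bandOffset, bandRise]; linarith)
  · have hk : (k : ℝ) + 1 + q ≤ (q : ℝ) ^ 2 := by
      exact_mod_cast (by omega : (k : ℕ) + 1 + q ≤ q ^ 2)
    exact goodPar_div hN (by dsimp [bandOffset]; positivity) q.cast_nonneg
      (by dsimp [bandOffset, bandRise]; linarith)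

lemma mem_bandUnion_iff (hq : 0 < q) {x y : ℝ} (hx : x ∈ Icc (0 : ℝ) 1)
    (hy : y ∈ Ioo (1 / q : ℝ) (1 - 1 / q)) :
    (x, y) ∈ bandUnion q ↔ (x, y) ∉ doubleGap ((q : ℝ) ^ 2) q := by
  have hN : (0 : ℝ) < (q : ℝ) ^ 2 := by positivity
  have hylo : (q : ℝ) < (q : ℝ) ^ 2 * y := by
    rw [← div_lt_iff₀' hN]
    convert hy.1 using 1
    field_simp
  have hyhi : (q : ℝ) ^ 2 * y < (q : ℝ) ^ 2 - q := by
    rw [← lt_div_iff₀' hN]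
    convert hy.2 using 1
    field_simp
  have hqx : q * x ∈ Icc (0 : ℝ) q :=
    ⟨mul_nonneg q.cast_nonneg hx.1, mul_le_of_le_one_right q.cast_nonneg hx.2⟩
  have horizontal : (∃ k : Fin (q ^ 2), (q : ℝ) ^ 2 * y ∈ Icc (k : ℝ) (k + 1 / 2)) ↔
      Int.fract ((q : ℝ) ^ 2 * y) ≤ 1 / 2 := by
    refine (fract_le_iff_exists_fin (by norm_num) ⟨by linarith [hqx.1, hqx.2], ?_⟩).symm
    push_cast
    linarith [hqx.1, hqx.2]
  have tilted : (∃ k : Fin (q ^ 2 - q),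
      (q : ℝ) ^ 2 * y - q * x ∈ Icc ((k : ℝ) + 1 / 2) (k + 1 / 2 + 1 / 2)) ↔
      Int.fract ((q : ℝ) ^ 2 * y - q * x - 1 / 2) ≤ 1 / 2 := by
    rw [fract_le_iff_exists_fin (n := q ^ 2 - q) (by norm_num) ⟨by linarith [hqx.2], ?_⟩]
    · simp only [mem_Icc, le_sub_iff_add_le, sub_le_iff_le_add]
    · rw [Nat.cast_sub (Nat.le_self_pow two_ne_zero q)]
      push_cast
      linarith [hqx.1]
  simp only [bandUnion, mem_iUnion, mem_par_div_iff hN, hx, true_and, Sum.exists, bandOffset,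
    bandRise, Sum.elim_inl, Sum.elim_inr, zero_mul, sub_zero, horizontal, tilted]
  simp only [doubleGap, mem_ofPred_eq, not_and_or, not_lt]

lemma exists_left_side_mem (hq : 0 < q) {y : ℝ} (hy : y ∈ Ioo (1 / q : ℝ) (1 - 1 / q)) :
    ∃ i, y ∈ Icc (bandOffset q i / (q : ℝ) ^ 2)
      (bandOffset q i / (q : ℝ) ^ 2 + 1 / (2 * (q : ℝ) ^ 2)) := by
  have hmem : (0, y) ∈ bandUnion q := by
    rw [mem_bandUnion_iff hq (by simp) hy]
    rintro ⟨horizontal_gap, tilted_gap⟩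
    dsimp only at horizontal_gap tilted_gap
    have hfract : Int.fract ((q : ℝ) ^ 2 * y - q * 0 - 1 / 2)
        = Int.fract ((q : ℝ) ^ 2 * y) - 1 / 2 := by
      refine Int.fract_eq_iff.2
        ⟨by linarith, by linarith [Int.fract_lt_one ((q : ℝ) ^ 2 * y)], ⌊(q : ℝ) ^ 2 * y⌋, ?_⟩
      linarith [Int.floor_add_fract ((q : ℝ) ^ 2 * y)]
    linarith [Int.fract_lt_one ((q : ℝ) ^ 2 * y)]
  have hδ : 0 ≤ 1 / (2 * (q : ℝ) ^ 2) := by positivity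
  simpa only [bandUnion, mem_iUnion, zero_mem_par_iff hδ] using hmem

lemma nullMeasurableSet_bandUnion (q : ℕ) : NullMeasurableSet (bandUnion q) :=
  .iUnion fun _ => nullMeasurableSet_par _ _ _

lemma volume_real_margin_le (q : ℕ) :
    volume.real (Icc (0 : ℝ) 1 ×ˢ (Icc (0 : ℝ) 1 \ Ioo (1 / q : ℝ) (1 - 1 / q))) ≤ 2 / q := by
  have hsub : Ioo (1 / q : ℝ) (1 - 1 / q) ⊆ Icc 0 1 :=
    Ioo_subset_Icc_self.trans (Icc_subset_Icc (by positivity) (sub_le_self _ (by positivity)))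
  rw [Measure.volume_eq_prod, measureReal_prod_prod, measureReal_sdiff hsub measurableSet_Ioo
    isCompact_Icc.measure_ne_top, Real.volume_real_Icc_of_le zero_le_one, Real.volume_real_Ioo]
  have hinner := le_max_left (1 - 1 / q - 1 / q : ℝ) 0
  have htwo : (2 / q : ℝ) = 1 / q + 1 / q := by ring
  linarith

lemma abs_volume_real_bandUnion_inter_sub_sdiff_doubleGap_le (hq : 0 < q) {B : Set (ℝ × ℝ)}
    (hB : MeasurableSet B) (hB_subset : B ⊆ Icc 0 1 ×ˢ Icc 0 1) :
    |volume.real (bandUnion q ∩ B) - volume.real (B \ doubleGap ((q : ℝ) ^ 2) q)| ≤ 2 / q := by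
  have hsquare : volume (Icc (0 : ℝ) 1 ×ˢ Icc (0 : ℝ) 1) ≠ ⊤ :=
    (isCompact_Icc.prod isCompact_Icc).measure_ne_top
  have : IsFiniteMeasure (volume.restrict B) :=
    isFiniteMeasure_restrict.2 (measure_ne_top_of_subset hB_subset hsquare)
  have differ_in_margin : symmDiff (bandUnion q) (doubleGap ((q : ℝ) ^ 2) q)ᶜ ∩ B
      ⊆ Icc (0 : ℝ) 1 ×ˢ (Icc (0 : ℝ) 1 \ Ioo (1 / q : ℝ) (1 - 1 / q)) := by
    rintro ⟨x, y⟩ ⟨hdiff, hxy⟩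
    obtain ⟨hx, hy⟩ := hB_subset hxy
    refine ⟨hx, hy, fun hy_inner => ?_⟩
    rw [mem_symmDiff, mem_bandUnion_iff hq hx hy_inner, mem_compl_iff] at hdiff
    tauto
  rw [sdiff_eq, inter_comm B, ← measureReal_restrict_apply' hB, ← measureReal_restrict_apply' hB]
  calc _ ≤ (volume.restrict B).real (symmDiff (bandUnion q) (doubleGap ((q : ℝ) ^ 2) q)ᶜ) :=
        abs_measureReal_sub_le_measureReal_symmDiff
          ((nullMeasurableSet_bandUnion q).mono_ac Measure.absolutelyContinuous_restrict)
          (measurableSet_doubleGap _ _).compl.nullMeasurableSet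
    _ ≤ 2 / q := by
        rw [measureReal_restrict_apply' hB]
        exact (measureReal_mono differ_in_margin
          (measure_ne_top_of_subset (prod_mono_right sdiff_subset) hsquare)).trans
            (volume_real_margin_le q)

lemma abs_volume_real_bandUnion_inter_box_sub_le (hq : 0 < q) {a b c d : ℝ} (ha : 0 ≤ a)
    (hab : a ≤ b) (hb : b ≤ 1) (hc : 0 ≤ c) (hcd : c ≤ d) (hd : d ≤ 1) :
    |volume.real (bandUnion q ∩ Icc a b ×ˢ Icc c d) - 3 / 4 * volume.real (Icc a b ×ˢ Icc c d)|
      ≤ 6 / q := by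
  have hq_one : (1 : ℝ) ≤ q := by exact_mod_cast hq
  have gap_error : 2 * ((d - c) / q + (b - a) / (q : ℝ) ^ 2) ≤ 4 / (q : ℝ) :=
    calc 2 * ((d - c) / q + (b - a) / (q : ℝ) ^ 2) ≤ 2 * (1 / q + 1 / (q : ℝ)) := by
          gcongr
          · linarith
          · linarith
          · exact le_self_pow₀ hq_one two_ne_zero
      _ = 4 / (q : ℝ) := by ring
  have hgap := abs_volume_real_box_inter_doubleGap_sub_le (N := (q : ℝ) ^ 2) (m := q)
    (by positivity) (by positivity) hab hcd
  rw [Nat.abs_cast, abs_of_nonneg (sq_nonneg (q : ℝ))] at hgap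
  have hmargin := abs_volume_real_bandUnion_inter_sub_sdiff_doubleGap_le hq
    (measurableSet_Icc.prod measurableSet_Icc) (prod_mono (Icc_subset_Icc ha hb)
      (Icc_subset_Icc hc hd))
  have hsplit := measureReal_inter_add_sdiff (μ := volume) (s := Icc a b ×ˢ Icc c d)
    (measurableSet_doubleGap ((q : ℝ) ^ 2) q)
    (isCompact_Icc.prod isCompact_Icc).measure_ne_top
  have hsum : (6 / q : ℝ) = 4 / q + 2 / q := by ring
  rw [volume_real_Icc_prod_Icc hab hcd] at hsplit ⊢
  rw [abs_le] at hgap hmargin ⊢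
  constructor <;> linarith

end Family

theorem stmt10_general (ε : ℝ) (hε : 0 < ε) :
    ∃ (S : ℕ) (b₁ b₂ δ : Fin S → ℝ),
      (∀ s, GoodPar (b₁ s) (b₂ s) (δ s)) ∧
      ({0} : Set ℝ) ×ˢ Icc ε (1 - ε) ⊆ ⋃ s, ({0} : Set ℝ) ×ˢ Icc (b₁ s) (b₁ s + δ s) ∧
      ∀ a b c d : ℝ, 0 ≤ a → a ≤ b → b ≤ 1 → 0 ≤ c → c ≤ d → d ≤ 1 →
        |volume.real ((⋃ s, Par (b₁ s) (b₂ s) (δ s)) ∩ Icc a b ×ˢ Icc c d) -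
          3 / 4 * volume.real (Icc a b ×ˢ Icc c d)| < ε := by
  obtain ⟨q, hqε⟩ := exists_nat_gt (6 / ε)
  have hq : 0 < q := Nat.cast_pos.1 ((by positivity : 0 < 6 / ε).trans hqε)
  have hsix : 6 / (q : ℝ) < ε := (div_lt_comm₀ hε (by positivity)).1 hqε
  have hone : 1 / (q : ℝ) < ε := (by gcongr; norm_num : 1 / (q : ℝ) ≤ 6 / q).trans_lt hsix
  let e := (Fintype.equivFin (Fin (q ^ 2) ⊕ Fin (q ^ 2 - q))).symm
  refine ⟨_, fun s => bandOffset q (e s) / (q : ℝ) ^ 2,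
    fun s => (bandOffset q (e s) + bandRise q (e s)) / (q : ℝ) ^ 2,
    fun _ => 1 / (2 * (q : ℝ) ^ 2), fun s => goodPar_band hq (e s), ?_, ?_⟩
  · rintro ⟨x, y⟩ ⟨hx, hy⟩
    obtain ⟨i, hi⟩ := exists_left_side_mem hq
      (show y ∈ Ioo (1 / q : ℝ) (1 - 1 / q) from ⟨hone.trans_le hy.1, by linarith [hy.2]⟩)
    exact mem_iUnion.2 ⟨e.symm i, hx, by simpa using hi⟩
  · intro a b c d ha hab hb hc hcd hd
    rw [e.surjective.iUnion_comp fun i => Par (bandOffset q i / (q : ℝ) ^ 2)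
      ((bandOffset q i + bandRise q i) / (q : ℝ) ^ 2) (1 / (2 * (q : ℝ) ^ 2))]
    exact (abs_volume_real_bandUnion_inter_box_sub_le hq ha hab hb hc hcd hd).trans_lt hsix

theorem stmt10 (ε : ℝ) (hε : 0 < ε) :
    ∃ (S : ℕ) (b₁ b₂ δ : Fin S → ℝ),
      (∀ s, GoodPar (b₁ s) (b₂ s) (δ s)) ∧
      ({0} : Set ℝ) ×ˢ Icc ε (1 - ε) ⊆ ⋃ s, ({0} : Set ℝ) ×ˢ Icc (b₁ s) (b₁ s + δ s) ∧
      (∀ x₀ ∈ Icc (0 : ℝ) 1,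
        |(volume ((⋃ s, Par (b₁ s) (b₂ s) (δ s)) ∩
            Icc (0 : ℝ) x₀ ×ˢ Icc (0 : ℝ) 1)).toReal -
          3 / 4 * (volume (Icc (0 : ℝ) x₀ ×ˢ Icc (0 : ℝ) 1)).toReal| < ε) ∧
      ∀ y₀ ∈ Icc (0 : ℝ) 1,
        |(volume ((⋃ s, Par (b₁ s) (b₂ s) (δ s)) ∩
            Icc (0 : ℝ) 1 ×ˢ Icc (0 : ℝ) y₀)).toReal -
          3 / 4 * (volume (Icc (0 : ℝ) 1 ×ˢ Icc (0 : ℝ) y₀)).toReal| < ε := by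
  obtain ⟨S, b₁, b₂, δ, hgood, hcover, hbox⟩ := stmt10_general ε hε
  exact ⟨S, b₁, b₂, δ, hgood, hcover,
    fun x₀ hx => hbox 0 x₀ 0 1 le_rfl hx.1 hx.2 le_rfl zero_le_one le_rfl,
    fun y₀ hy => hbox 0 1 0 y₀ le_rfl zero_le_one le_rfl le_rfl hy.1 hy.2⟩
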